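/- Fix an integer n ≥ 1 and a real q > 1, and set z_{ij} = w_i* w_j ∈ B(H_n) for 1 ≤ i, j ≤ n+1. For each index tuple consisting of r = (r_1,…,r_n) ∈ ℕⁿ, an integer m ≥ 0, and sequences i_1 ≥ i_2 ≥ ⋯ ≥ i_m and j_1 ≤ j_2 ≤ ⋯ ≤ j_m of elements of {1,…,n+1} whose value sets {i_1,…,i_m} and {j_1,…,j_m} are disjoint, define the operator P^{r,i,j,m} = z_{11}^{r_1} ⋯ z_{nn}^{r_n} z_{i_1 j_1} ⋯ z_{i_m j_m}. Then the family of all such operators P^{r,i,j,m}, indexed by these tuples, is linearly independent over ℂ. -/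

import Mathlib

noncomputable section

/-- The Hilbert space `H_n = ℓ²(ℕⁿ)`. -/
abbrev Hn (n : ℕ) : Type := lp (fun _ : (Fin n → ℕ) => ℂ) 2

/-- The standard orthonormal basis vectors `e_k`, `k ∈ ℕⁿ`, of `ℓ²(ℕⁿ)`. -/
def en {n : ℕ} (k : Fin n → ℕ) : Hn n := lp.single 2 k 1

/-- For an index `j` with `1 ≤ j+1 ≤ n` (so `w_{j+2} = γ^{⊗(n-1-j)} ⊗ α* ⊗ 1^{⊗j}`),
the (0-based) coordinate `n - 1 - j` at which the shift `α*` acts. -/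
def shiftIdx {n : ℕ} (j : Fin n) : Fin n := ⟨n - 1 - (j : ℕ), by have := j.isLt; omega⟩

/-- `IsWFamily q w` says that `w 0, …, w n` are the operators
`w_1, …, w_{n+1}` on `ℓ²(ℕⁿ)` from the paper (for the parameter `q`):
`w_1 e_k = q^{-(k_1+⋯+k_n)} e_k` and for `2 ≤ i ≤ n+1`,
`w_i e_k = q^{-(k_1+⋯+k_{n+1-i})} (1-q^{-2(k_{n+2-i}+1)})^{1/2} e_{k+δ_{n+2-i}}`.
These are the images of the generators `u_{n+1,i}` of `C(S_q^{2n+1})` (up to a circle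
factor) under the faithful representation `π_{n(n-1)⋯21}∘Δ^{n-1}`. -/
def IsWFamily (q : ℝ) {n : ℕ} (w : Fin (n + 1) → (Hn n →L[ℂ] Hn n)) : Prop :=
  (∀ k : Fin n → ℕ, w 0 (en k) = (q ^ (-(∑ m, (k m : ℤ)))) • en k) ∧
  (∀ (j : Fin n) (k : Fin n → ℕ),
    w j.succ (en k) =
      ((q ^ (-(∑ m ∈ Finset.univ.filter (fun m : Fin n => (m : ℕ) < n - 1 - (j : ℕ)), (k m : ℤ)))) *
          Real.sqrt (1 - q ^ (-2 * ((k (shiftIdx j) : ℤ) + 1)))) •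
        en (Function.update k (shiftIdx j) (k (shiftIdx j) + 1)))

/-- `B_n(q)`: the unital C*-subalgebra of bounded operators on `ℓ²(ℕⁿ)` generated by
`{w_i* w_j : 1 ≤ i, j ≤ n+1}` (the closed star-subalgebra they generate); this is the
concrete realization of the standard quantum projective space algebra `C(ℂP_q^n)`. -/
def projAlg {n : ℕ} (w : Fin (n + 1) → (Hn n →L[ℂ] Hn n)) :
    StarSubalgebra ℂ (Hn n →L[ℂ] Hn n) :=
  (StarAlgebra.adjoin ℂ
    {x : Hn n →L[ℂ] Hn n | ∃ i j : Fin (n + 1), x = star (w i) * w j}).topologicalClosure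


/-- Index data for the monomials `P^{r,i,j,m} = z_{11}^{r_1} ⋯ z_{nn}^{r_n} z_{i_1 j_1} ⋯
z_{i_m j_m}`: an exponent vector `r ∈ ℕⁿ`, a length `m ≥ 0`, a decreasing sequence
`i_1 ≥ ⋯ ≥ i_m` and an increasing sequence `j_1 ≤ ⋯ ≤ j_m` in `{1,…,n+1}` whose value
sets are disjoint. -/
def PIdx (n : ℕ) : Type :=
  Σ m : ℕ, (Fin n → ℕ) ×
    {p : (Fin m → Fin (n + 1)) × (Fin m → Fin (n + 1)) //
      Antitone p.1 ∧ Monotone p.2 ∧ Disjoint (Set.range p.1) (Set.range p.2)}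

/-- The monomial `P^{r,i,j,m} = z_{11}^{r_1} ⋯ z_{nn}^{r_n} z_{i_1 j_1} ⋯ z_{i_m j_m}`,
where `z_{ij} = w_i* w_j` (here indices `1,…,n+1` correspond to `Fin (n+1)`, with the
diagonal factors ranging over the first `n` indices). -/
def Pop {n : ℕ} (w : Fin (n + 1) → (Hn n →L[ℂ] Hn n)) (t : PIdx n) :
    Hn n →L[ℂ] Hn n :=
  (List.ofFn fun s : Fin n =>
      (star (w s.castSucc) * w s.castSucc) ^ (t.2.1 s)).prod *
  (List.ofFn fun s : Fin t.1 =>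
      star (w (t.2.2.1.1 s)) * w (t.2.2.1.2 s)).prod

/-!
With respect to the basis `e_k`, the factor `z_{i_1 j_1} ⋯ z_{i_m j_m}` is a weighted shift and
`z_{11}^{r_1} ⋯ z_{nn}^{r_n}` is diagonal. The degree of the shift determines the sequences `i` and
`j`, because they are monotone, of equal length and have disjoint values. A linear relation
therefore splits into one relation for each pair `(i, j)`, and each of these is a relation between
monomials in the eigenvalues `λ_1, …, λ_n` of `z_{11}, …, z_{nn}` on a translated orthant `c + ℕⁿ`.
Writing `Y_a(k) = q^{-2(k_1 + ⋯ + k_{n+1-a})}`, one has `λ_1 = Y_1` and `λ_a = Y_a - q⁻² Y_{a-1}`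
for `a ≥ 2`. This change of variables is invertible, and the monomials in `Y_1, …, Y_n` are
multiples of distinct characters of `ℕⁿ`, hence linearly independent by Dedekind's theorem.
-/

section AlgebraicIndependence

variable {ι R A : Type*} [CommRing R] [CommRing A] [Algebra R A]

theorem algebraicIndependent_iff_linearIndependent_monomials {x : ι → A} :
    AlgebraicIndependent R x ↔
      LinearIndependent R fun r : ι →₀ ℕ => r.prod fun i e => x i ^ e := by
  have linearCombination_eq :
      Finsupp.linearCombination R (fun r : ι →₀ ℕ => r.prod fun i e => x i ^ e) =
        (MvPolynomial.aeval x).toLinearMap ∘ₗ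
          (MvPolynomial.basisMonomials ι R).repr.symm.toLinearMap := by
    ext r
    simp [MvPolynomial.aeval_monomial]
  rw [algebraicIndependent_iff_injective_aeval, LinearIndependent, linearCombination_eq,
    LinearMap.coe_comp]
  exact (EquivLike.injective_comp (MvPolynomial.basisMonomials ι R).repr.symm _).symm

theorem algebraicIndependent_pow_addMonoidHom {K M : Type*} [Field K] [AddMonoid M] {t : K}
    (ht : Function.Injective fun e : ℕ => t ^ e) {f : ι → M →+ ℕ} (hf : LinearIndependent ℕ f)
    (c : M) : AlgebraicIndependent K fun i k => t ^ f i (c + k) := by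
  have t_ne_zero : t ≠ 0 := by
    rintro rfl
    exact absurd (@ht 1 2 (by simp)) (by decide)
  let L : (ι →₀ ℕ) → M →+ ℕ := Finsupp.linearCombination ℕ f
  let χ (r : ι →₀ ℕ) : Multiplicative M →* K := (powersHom K t).comp (L r).toMultiplicative
  have χ_injective : Function.Injective χ := fun r r' h =>
    hf (AddMonoidHom.ext fun k => ht (DFunLike.congr_fun h (Multiplicative.ofAdd k)))
  have monomial_eq (r : ι →₀ ℕ) : (r.prod fun i e => (fun k => t ^ f i (c + k)) ^ e) =
      t ^ L r c • fun k => χ r (Multiplicative.ofAdd k) := by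
    funext k
    have : χ r (Multiplicative.ofAdd k) = t ^ L r k := rfl
    rw [Pi.smul_apply, this, smul_eq_mul, ← pow_add, ← map_add]
    simp [L, Finsupp.prod, Finsupp.linearCombination_apply, Finsupp.sum, ← pow_mul,
      Finset.prod_pow_eq_pow_sum, mul_comm]
  rw [algebraicIndependent_iff_linearIndependent_monomials]
  simp only [monomial_eq]
  exact ((linearIndependent_monoidHom (Multiplicative M) K).comp χ χ_injective).units_smul
    fun r => Units.mk0 _ (pow_ne_zero (L r c) t_ne_zero)

/-- The substitution is unitriangular, hence an automorphism of the polynomial ring. -/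
theorem algebraicIndependent_sub_smul_pred {n : ℕ} {x y : Fin n → A}
    (hx : AlgebraicIndependent R x) (c : R) (h_zero : ∀ i : Fin n, (i : ℕ) = 0 → y i = x i)
    (h_succ : ∀ i j : Fin n, (i : ℕ) + 1 = j → y j = x j - c • x i) :
    AlgebraicIndependent R y := by
  cases n with
  | zero => exact Subsingleton.elim x y ▸ hx
  | succ n =>
    let f : Fin (n + 1) → MvPolynomial (Fin (n + 1)) R :=
      Fin.cases (.X 0) fun j => .X j.succ - c • .X j.castSucc
    let g : Fin (n + 1) → MvPolynomial (Fin (n + 1)) R :=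
      Fin.induction (.X 0) fun j previous => .X j.succ + c • previous
    have g_comp_f : MvPolynomial.aeval g ∘ f = MvPolynomial.X := by
      funext i
      cases i using Fin.cases <;> simp [f, g]
    have hf : AlgebraicIndependent R f :=
      .of_comp (MvPolynomial.aeval g) (g_comp_f ▸ MvPolynomial.algebraicIndependent_X _ R)
    convert hx.aeval_of_algebraicIndependent hf with i
    cases i using Fin.cases with
    | zero => simp [f, h_zero 0 rfl]
    | succ j => simp [f, h_succ j.castSucc j.succ (by simp)]

end AlgebraicIndependence

section Multisets

theorem eq_of_sum_Iic_eq {α M : Type*} [LinearOrder α] [LocallyFiniteOrderBot α]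
    [WellFoundedLT α] [AddCancelCommMonoid M] {f g : α → M}
    (h : ∀ a, ∑ i ∈ Finset.Iic a, f i = ∑ i ∈ Finset.Iic a, g i) : f = g := by
  funext a
  induction a using WellFoundedLT.induction with
  | ind a ih =>
    have key := h a
    rw [← Finset.Iio_insert, Finset.sum_insert (by simp), Finset.sum_insert (by simp),
      Finset.sum_congr rfl fun i hi => ih i (Finset.mem_Iio.mp hi)] at key
    exact add_right_cancel key

theorem multiset_eq_of_add_eq_add_of_disjoint {α : Type*} {s t s' t' : Multiset α}
    (h : s + t' = s' + t) (hst : Disjoint s t) (hst' : Disjoint s' t') : s = s' ∧ t = t' := by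
  classical
  have count_eq (a : α) : s.count a = s'.count a ∧ t.count a = t'.count a := by
    have sum_eq := congrArg (Multiset.count a) h
    have min_eq := congrArg (Multiset.count a) (Multiset.inter_eq_zero_iff_disjoint.2 hst)
    have min_eq' := congrArg (Multiset.count a) (Multiset.inter_eq_zero_iff_disjoint.2 hst')
    simp only [Multiset.count_add, Multiset.count_inter, Multiset.count_zero]
      at sum_eq min_eq min_eq'
    omega
  exact ⟨Multiset.ext.2 fun a => (count_eq a).1, Multiset.ext.2 fun a => (count_eq a).2⟩

variable {α : Type*} [LinearOrder α] {m : ℕ} {f g : Fin m → α}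

theorem eq_of_monotone_of_ofFn_perm (hf : Monotone f) (hg : Monotone g)
    (h : (List.ofFn f).Perm (List.ofFn g)) : f = g :=
  List.ofFn_injective (h.eq_of_pairwise' hf.sortedLE_ofFn.pairwise hg.sortedLE_ofFn.pairwise)

theorem eq_of_antitone_of_ofFn_perm (hf : Antitone f) (hg : Antitone g)
    (h : (List.ofFn f).Perm (List.ofFn g)) : f = g :=
  eq_of_monotone_of_ofFn_perm (α := αᵒᵈ) hf hg h

end Multisets

section WeightedShifts

variable {𝕜 E ι : Type*} [Field 𝕜] [AddCommGroup E] [Module 𝕜 E]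

theorem sum_filter_eq_zero_of_linearIndependent {κ τ : Type*} [DecidableEq κ] {v : κ → E}
    (hv : LinearIndependent 𝕜 v) {s : Finset τ} {x : τ → 𝕜} {κ' : τ → κ}
    (h : ∑ t ∈ s, x t • v (κ' t) = 0) (k : κ) : ∑ t ∈ s with κ' t = k, x t = 0 := by
  have sum_single : ∑ t ∈ s, Finsupp.single (κ' t) (x t) = 0 :=
    linearIndependent_iff.1 hv _ (by simpa [map_sum] using h)
  simpa [Finsupp.finsetSum_apply, Finsupp.single_apply, Finset.sum_filter] using
    DFunLike.congr_fun sum_single k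

variable [TopologicalSpace E]

theorem list_ofFn_prod_pow_apply_of_eigen {N : ℕ} {T : Fin N → E →L[𝕜] E} {μ : Fin N → 𝕜} {v : E}
    (h : ∀ s, T s v = μ s • v) (r : Fin N → ℕ) :
    (List.ofFn fun s => T s ^ r s).prod v = (∏ s, μ s ^ r s) • v := by
  have pow_apply (s : Fin N) (e : ℕ) : (T s ^ e) v = μ s ^ e • v := by
    induction e with
    | zero => simp
    | succ e ih => rw [pow_succ, mul_apply_eq_comp, h, map_smul, ih, smul_smul, pow_succ']
  induction N with
  | zero => simp
  | succ N ih =>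
    rw [List.ofFn_succ, List.prod_cons, mul_apply_eq_comp,
      ih (fun s => h s.succ) (fun s => r s.succ) (fun s => pow_apply s.succ), map_smul, pow_apply,
      smul_smul, Fin.prod_univ_succ, mul_comm]

variable [AddCommMonoid ι] {e : ι → E}

/-- `T` maps `e (k + a)` to a nonzero multiple of `e (k + b)` for every `k`, so it is a weighted
shift of degree `b - a` with respect to `e`. Nothing is asked of `T` on vectors whose index is not
of the form `k + a`; this makes the notion closed under products even though lowering operators
annihilate some of the `e k`. -/
def IsWeightedShift (e : ι → E) (T : E →L[𝕜] E) (a b : ι) : Prop :=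
  ∀ k, ∃ c : 𝕜, c ≠ 0 ∧ T (e (k + a)) = c • e (k + b)

namespace IsWeightedShift

theorem one : IsWeightedShift e (1 : E →L[𝕜] E) 0 0 :=
  fun _ => ⟨1, one_ne_zero, (one_smul 𝕜 _).symm⟩

theorem mul {T₁ T₂ : E →L[𝕜] E} {a₁ b₁ a₂ b₂ : ι} (h₁ : IsWeightedShift e T₁ a₁ b₁)
    (h₂ : IsWeightedShift e T₂ a₂ b₂) : IsWeightedShift e (T₁ * T₂) (a₁ + a₂) (b₁ + b₂) := by
  intro k
  obtain ⟨c₂, hc₂, hT₂⟩ := h₂ (k + a₁)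
  obtain ⟨c₁, hc₁, hT₁⟩ := h₁ (k + b₂)
  refine ⟨c₂ * c₁, mul_ne_zero hc₂ hc₁, ?_⟩
  rw [← add_assoc, mul_apply_eq_comp, hT₂, add_right_comm, map_smul, hT₁, smul_smul,
    add_right_comm, add_assoc]

theorem prod_ofFn {m : ℕ} {T : Fin m → E →L[𝕜] E} {a b : Fin m → ι}
    (h : ∀ s, IsWeightedShift e (T s) (a s) (b s)) :
    IsWeightedShift e (List.ofFn T).prod (∑ s, a s) (∑ s, b s) := by
  induction m with
  | zero => simpa using one
  | succ m ih =>
    rw [List.ofFn_succ, List.prod_cons, Fin.sum_univ_succ, Fin.sum_univ_succ]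
    exact (h 0).mul (ih fun s => h s.succ)

end IsWeightedShift

variable [IsTopologicalAddGroup E] [ContinuousConstSMul 𝕜 E]

theorem sum_filter_eq_zero_of_common_source [DecidableEq ι] (he : LinearIndependent 𝕜 e)
    {τ : Type*} {D T : τ → E →L[𝕜] E} {φ c : τ → ι → 𝕜} {a b : τ → ι}
    (hD : ∀ p k, D p (e k) = φ p k • e k)
    (hT : ∀ p k, T p (e (k + a p)) = c p k • e (k + b p)) {S : Finset τ} {g : τ → 𝕜}
    (hg : ∑ p ∈ S, g p • (D p * T p) = 0) {x : ι} {B : τ → ι} (hB : ∀ p ∈ S, B p + a p = x)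
    (y : ι) : ∑ p ∈ S with B p + b p = y, g p * (c p (B p) * φ p y) = 0 := by
  have apply_source (p) (hp : p ∈ S) :
      (D p * T p) (e x) = (c p (B p) * φ p (B p + b p)) • e (B p + b p) := by
    rw [← hB p hp, mul_apply_eq_comp, hT, map_smul, hD, smul_smul]
  have relation := DFunLike.congr_fun hg (e x)
  simp only [sum_apply, smul_apply, zero_apply] at relation
  rw [Finset.sum_congr rfl fun p hp => by rw [apply_source p hp, smul_smul]] at relation
  rw [← sum_filter_eq_zero_of_linearIndependent he relation y]
  exact Finset.sum_congr rfl fun p hp => by rw [(Finset.mem_filter.1 hp).2]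

/-- The dependence relation is read off along the basis vectors reached by one fixed shift from a
source lying in the domain of all shifts involved; only the terms with that shift contribute. -/
theorem linearIndependent_mul_of_isWeightedShift {ι : Type*} [AddCancelCommMonoid ι] {e : ι → E}
    (he : LinearIndependent 𝕜 e) {σ ρ : Type*} {D : ρ → E →L[𝕜] E} {φ : ρ → ι → 𝕜}
    (hD : ∀ r k, D r (e k) = φ r k • e k)
    (hφ : ∀ c, LinearIndependent 𝕜 fun r k => φ r (c + k))
    {T : σ → E →L[𝕜] E} {a b : σ → ι} (hT : ∀ s, IsWeightedShift e (T s) (a s) (b s))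
    (hab : ∀ s s', a s + b s' = a s' + b s → s = s') :
    LinearIndependent 𝕜 fun p : σ × ρ => D p.2 * T p.1 := by
  classical
  choose c hc hTc using hT
  rw [linearIndependent_iff']
  rintro S g hg ⟨s₀, r₀⟩ h₀
  let A : ι := ∑ p ∈ S, a p.1
  let B (p : σ × ρ) : ι := ∑ p' ∈ S.erase p, a p'.1
  have hB (p) (hp : p ∈ S) : B p + a p.1 = A := Finset.sum_erase_add S (fun p => a p.1) hp
  have source_eq (l : ι) (p) (hp : p ∈ S) : B p + l + a s₀ + a p.1 = A + l + a s₀ := by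
    rw [← hB p hp]; abel
  have target_eq_iff (l : ι) (p) (hp : p ∈ S) :
      B p + l + a s₀ + b p.1 = A + b s₀ + l ↔ p.1 = s₀ := by
    have left_eq : B p + l + a s₀ + b p.1 + a p.1 = A + l + (a s₀ + b p.1) := by
      rw [← hB p hp]; abel
    have right_eq : A + b s₀ + l + a p.1 = A + l + (a p.1 + b s₀) := by abel
    rw [← add_left_inj (a p.1), left_eq, right_eq, add_right_inj]
    exact ⟨fun h => (hab _ _ h).symm, fun h => by rw [h]⟩
  have relation_of_same_shift :
      ∑ p ∈ S with p.1 = s₀, g p • (fun l => φ p.2 (A + b s₀ + l)) = 0 := by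
    funext l
    have relation := sum_filter_eq_zero_of_common_source (D := fun p : σ × ρ => D p.2)
      (T := fun p => T p.1) (φ := fun p => φ p.2) (c := fun p => c p.1) (a := fun p => a p.1)
      (b := fun p => b p.1) (B := fun p => B p + l + a s₀) (x := A + l + a s₀) he
      (fun p => hD p.2) (fun p => hTc p.1) hg (source_eq l) (A + b s₀ + l)
    rw [Finset.filter_congr (target_eq_iff l)] at relation
    refine (mul_eq_zero.1 ?_).resolve_left (hc s₀ (A + l))
    rw [← relation, Finset.sum_apply, Finset.mul_sum]
    refine Finset.sum_congr rfl fun p hp => ?_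
    obtain ⟨hpS, rfl⟩ := Finset.mem_filter.1 hp
    rw [add_right_comm (B p), hB p hpS, Pi.smul_apply, smul_eq_mul, mul_left_comm]
  have := sum_filter_eq_zero_of_linearIndependent (hφ (A + b s₀)) relation_of_same_shift r₀
  rwa [Finset.filter_filter, Finset.sum_eq_single_of_mem (s₀, r₀) (by simpa) (by grind)] at this

end WeightedShifts

section HilbertBasis

variable {𝕜 E ι : Type*} [RCLike 𝕜] [NormedAddCommGroup E] [InnerProductSpace 𝕜 E]
  [CompleteSpace E]

theorem star_apply_of_apply_eq_smul (b : HilbertBasis ι 𝕜 E) {T : E →L[𝕜] E} {c : ι → 𝕜}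
    {f : ι → ι} (hf : Function.Injective f) (hT : ∀ i, T (b i) = c i • b (f i)) (i : ι) :
    star T (b (f i)) = star (c i) • b i := by
  classical
  apply b.repr.injective
  ext l
  rw [b.repr_apply_apply, b.repr_apply_apply, ContinuousLinearMap.star_eq_adjoint,
    ContinuousLinearMap.adjoint_inner_right, hT, inner_smul_left, inner_smul_right,
    orthonormal_iff_ite.1 b.orthonormal, orthonormal_iff_ite.1 b.orthonormal]
  by_cases h : l = i
  · simp [h]
  · simp [h, hf.ne h]

end HilbertBasis

section QuantumProjectiveSpace

variable {n : ℕ}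

/-- The standard basis `en` of `ℓ²(ℕⁿ)`, bundled as a Hilbert basis. -/
def enBasis (n : ℕ) : HilbertBasis (Fin n → ℕ) ℂ (Hn n) :=
  .ofRepr (.refl ℂ (Hn n))

theorem coe_enBasis : ⇑(enBasis n) = en :=
  funext fun k => ((enBasis n).repr_symm_single k).symm

theorem linearIndependent_en : LinearIndependent ℂ (en : (Fin n → ℕ) → Hn n) :=
  coe_enBasis (n := n) ▸ (enBasis n).orthonormal.linearIndependent

theorem shiftIdx_involutive : Function.Involutive (shiftIdx (n := n)) := fun j => by
  ext
  simp only [shiftIdx]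
  omega

/-- The multi-index by which the monomial `∏_{a ∈ s} w_a` raises basis vectors: the generator
`w j.succ` raises the coordinate `shiftIdx j`, while `w 0` raises none. -/
def raise : Multiset (Fin (n + 1)) →+ (Fin n → ℕ) :=
  .pi fun m => Multiset.countAddMonoidHom (shiftIdx m).succ

theorem raise_zero_singleton : raise {(0 : Fin (n + 1))} = 0 := by
  ext m
  simp [raise]

theorem add_raise_succ_singleton (k : Fin n → ℕ) (j : Fin n) :
    k + raise {j.succ} = Function.update k (shiftIdx j) (k (shiftIdx j) + 1) := by
  ext m
  have : shiftIdx m = j ↔ m = shiftIdx j := shiftIdx_involutive.eq_iff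
  simp only [raise, Pi.add_apply, AddMonoidHom.pi_apply, Multiset.coe_countAddMonoidHom,
    Multiset.count_singleton, Function.update_apply, Fin.succ_inj, this]
  split_ifs with h <;> simp [h]

theorem eq_of_raise_eq_of_card_eq {s t : Multiset (Fin (n + 1))} (h : raise s = raise t)
    (h_card : s.card = t.card) : s = t := by
  have count_succ_eq (j : Fin n) : s.count j.succ = t.count j.succ := by
    simpa [raise, shiftIdx_involutive j] using congrFun h (shiftIdx j)
  have count_zero_eq : s.count 0 = t.count 0 := by
    rw [← Multiset.sum_count_eq_card fun a _ => Finset.mem_univ a,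
      ← Multiset.sum_count_eq_card fun a _ => Finset.mem_univ a, Fin.sum_univ_succ,
      Fin.sum_univ_succ, Finset.sum_congr rfl fun j _ => count_succ_eq j] at h_card
    exact Nat.add_right_cancel h_card
  exact Multiset.ext.2 (Fin.cases count_zero_eq count_succ_eq)

theorem sum_raise_singleton {m : ℕ} (f : Fin m → Fin (n + 1)) :
    ∑ l, raise {f l} = raise (List.ofFn f) := by
  rw [← map_sum, ← Fin.univ_val_map, ← Multiset.sum_map_singleton (Finset.univ.val.map f),
    Multiset.map_map]
  rfl

/-- The data `m`, `i`, `j` of an index `(r, i, j, m)` in `PIdx n`, which determine the off-diagonal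
factors of the monomial. -/
abbrev OffDiagIdx (n : ℕ) : Type :=
  Σ m : ℕ, {p : (Fin m → Fin (n + 1)) × (Fin m → Fin (n + 1)) //
    Antitone p.1 ∧ Monotone p.2 ∧ Disjoint (Set.range p.1) (Set.range p.2)}

namespace OffDiagIdx

/-- The multi-index by which `w_{i_1}* ⋯ w_{i_m}*` lowers basis vectors, serving as the first index
of the weighted shift `z_{i_1 j_1} ⋯ z_{i_m j_m}` in `IsWeightedShift`. -/
def source (s : OffDiagIdx n) : Fin n → ℕ :=
  ∑ l, raise {s.2.1.1 l}

/-- The multi-index by which `w_{j_1} ⋯ w_{j_m}` raises basis vectors, serving as the second index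
of the weighted shift `z_{i_1 j_1} ⋯ z_{i_m j_m}` in `IsWeightedShift`. -/
def target (s : OffDiagIdx n) : Fin n → ℕ :=
  ∑ l, raise {s.2.1.2 l}

theorem eq_of_source_add_target_eq {s t : OffDiagIdx n}
    (h : s.source + t.target = t.source + s.target) : s = t := by
  obtain ⟨m, ⟨i, j⟩, hi, hj, h_disjoint⟩ := s
  obtain ⟨m', ⟨i', j'⟩, hi', hj', h_disjoint'⟩ := t
  simp only [source, target, sum_raise_singleton, ← map_add] at h
  have values_disjoint {m : ℕ} {i j : Fin m → Fin (n + 1)}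
      (h : Disjoint (Set.range i) (Set.range j)) :
      Disjoint (List.ofFn i : Multiset (Fin (n + 1))) (List.ofFn j) := by
    rw [Multiset.disjoint_left]
    simpa [Set.disjoint_left, List.mem_ofFn] using h
  obtain ⟨i_perm, j_perm⟩ := multiset_eq_of_add_eq_add_of_disjoint
    (eq_of_raise_eq_of_card_eq h (by simp [add_comm])) (values_disjoint h_disjoint)
    (values_disjoint h_disjoint')
  obtain rfl : m = m' := by simpa using congrArg Multiset.card i_perm
  obtain rfl := eq_of_antitone_of_ofFn_perm hi hi' (Multiset.coe_eq_coe.1 i_perm)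
  obtain rfl := eq_of_monotone_of_ofFn_perm hj hj' (Multiset.coe_eq_coe.1 j_perm)
  rfl

end OffDiagIdx

/-- The exponent `k_1 + ⋯ + k_{n-a}` of `q⁻¹` in the coefficient of `w a (en k)`, where `a` is
counted from `0` as in `IsWFamily`. -/
def headSum (a : Fin (n + 1)) : (Fin n → ℕ) →+ ℕ :=
  ∑ m with m.val + a.val < n, Pi.evalAddMonoidHom (fun _ => ℕ) m

theorem headSum_apply (a : Fin (n + 1)) (k : Fin n → ℕ) :
    headSum a k = ∑ m with m.val + a.val < n, k m := by
  simp [headSum]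

theorem headSum_castSucc (j : Fin n) (k : Fin n → ℕ) :
    headSum j.castSucc k = headSum j.succ k + k (shiftIdx j) := by
  have filter_eq : Finset.univ.filter (fun m : Fin n => (m : ℕ) + j.castSucc < n) =
      insert (shiftIdx j) (Finset.univ.filter fun m : Fin n => (m : ℕ) + j.succ < n) := by
    ext m
    simp only [Finset.mem_filter_univ, Finset.mem_insert, Fin.ext_iff, shiftIdx, Fin.val_castSucc,
      Fin.val_succ]
    omega
  rw [headSum_apply, headSum_apply, filter_eq, Finset.sum_insert, add_comm]
  simp only [Finset.mem_filter_univ, shiftIdx, Fin.val_succ]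
  omega

theorem linearIndependent_headSum_castSucc :
    LinearIndependent ℕ fun s : Fin n => headSum s.castSucc := by
  have headSum_single (s j : Fin n) :
      headSum s.castSucc (Pi.single (shiftIdx j) 1) = if s ≤ j then 1 else 0 := by
    simp only [headSum_apply, Finset.sum_pi_single', Finset.mem_filter_univ, shiftIdx,
      Fin.val_castSucc, Fin.le_def]
    grind
  rw [Fintype.linearIndependent_iffₛ]
  refine fun r r' h => congrFun (eq_of_sum_Iic_eq fun j => ?_)
  simpa [headSum_single, ← Finset.sum_filter, ← Finset.filter_ge_eq_Iic] using
    DFunLike.congr_fun h (Pi.single (shiftIdx j) 1)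

/-- The coefficient of `w a (en k)`, a multiple of `en (k + raise {a})`. -/
def weight (q : ℝ) (a : Fin (n + 1)) (k : Fin n → ℕ) : ℝ :=
  q ^ (-(headSum a k : ℤ)) *
    (Fin.cases 1 (fun j => √(1 - q ^ (-2 * ((k (shiftIdx j) : ℤ) + 1)))) a : ℝ)

variable {q : ℝ}

theorem zpow_neg_two_mul_add_one (q : ℝ) (e : ℕ) :
    q ^ (-2 * ((e : ℤ) + 1)) = (q ^ 2)⁻¹ ^ (e + 1) := by
  rw [zpow_mul, zpow_neg]
  norm_cast

theorem inv_sq_lt_one (hq : 1 < |q|) : (q ^ 2)⁻¹ < 1 :=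
  inv_lt_one_of_one_lt₀ ((one_lt_sq_iff_one_lt_abs q).2 hq)

theorem one_sub_zpow_pos (hq : 1 < |q|) (e : ℕ) : 0 < 1 - q ^ (-2 * ((e : ℤ) + 1)) := by
  rw [zpow_neg_two_mul_add_one, sub_pos]
  exact pow_lt_one₀ (by positivity) (inv_sq_lt_one hq) e.succ_ne_zero

theorem weight_ne_zero (hq : 1 < |q|) (a : Fin (n + 1)) (k : Fin n → ℕ) : weight q a k ≠ 0 := by
  have q_ne_zero : q ≠ 0 := by
    rintro rfl
    norm_num at hq
  refine mul_ne_zero (zpow_ne_zero _ q_ne_zero) ?_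
  cases a using Fin.cases with
  | zero => exact one_ne_zero
  | succ j => exact (Real.sqrt_pos.2 (one_sub_zpow_pos hq _)).ne'

theorem zpow_neg_sq (q : ℝ) (e : ℕ) : (q ^ (-(e : ℤ))) ^ 2 = (q ^ 2)⁻¹ ^ e := by
  rw [zpow_neg, zpow_natCast, inv_pow, inv_pow, pow_right_comm]

theorem weight_zero_sq (k : Fin n → ℕ) : weight q 0 k ^ 2 = (q ^ 2)⁻¹ ^ headSum 0 k := by
  rw [weight, mul_pow, zpow_neg_sq]
  simp

theorem weight_succ_sq (hq : 1 < |q|) (j : Fin n) (k : Fin n → ℕ) :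
    weight q j.succ k ^ 2 =
      (q ^ 2)⁻¹ ^ headSum j.succ k - (q ^ 2)⁻¹ * (q ^ 2)⁻¹ ^ headSum j.castSucc k := by
  rw [weight, mul_pow, zpow_neg_sq, Fin.cases_succ, Real.sq_sqrt (one_sub_zpow_pos hq _).le,
    zpow_neg_two_mul_add_one, headSum_castSucc]
  ring

theorem algebraicIndependent_weight_sq (hq : 1 < |q|) (c : Fin n → ℕ) :
    AlgebraicIndependent ℂ fun (s : Fin n) k => (weight q s.castSucc (c + k) : ℂ) ^ 2 := by
  have pow_injective : Function.Injective fun e : ℕ => ((q : ℂ) ^ 2)⁻¹ ^ e := by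
    have inv_sq_pos : 0 < (q ^ 2)⁻¹ := inv_pos.2 (zero_lt_one.trans <|
      (one_lt_sq_iff_one_lt_abs q).2 hq)
    intro e e' h
    dsimp only at h
    exact pow_right_injective₀ inv_sq_pos (inv_sq_lt_one hq).ne (by exact_mod_cast h)
  refine algebraicIndependent_sub_smul_pred (algebraicIndependent_pow_addMonoidHom pow_injective
    linearIndependent_headSum_castSucc c) ((q : ℂ) ^ 2)⁻¹ (fun i hi => ?_) fun i j hij => ?_
  · funext k
    rw [show i.castSucc = 0 from Fin.ext hi]
    exact_mod_cast weight_zero_sq (q := q) (c + k)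
  · funext k
    rw [show j.castSucc = i.succ from Fin.ext hij.symm, Pi.sub_apply, Pi.smul_apply, smul_eq_mul]
    exact_mod_cast weight_succ_sq hq i (c + k)

theorem linearIndependent_prod_weight_sq_pow (hq : 1 < |q|) (c : Fin n → ℕ) :
    LinearIndependent ℂ fun (r : Fin n → ℕ) k =>
      ∏ s, ((weight q s.castSucc (c + k) : ℂ) ^ 2) ^ r s := by
  have := algebraicIndependent_iff_linearIndependent_monomials.1
    (algebraicIndependent_weight_sq hq c)
  convert! this.comp _ Finsupp.equivFunOnFinite.symm.injective with r k
  simp [Finsupp.prod_fintype]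

/-- The diagonal factor `z_{11}^{r_1} ⋯ z_{nn}^{r_n}` of `Pop`. -/
def diagMonomial (w : Fin (n + 1) → Hn n →L[ℂ] Hn n) (r : Fin n → ℕ) : Hn n →L[ℂ] Hn n :=
  (List.ofFn fun s => (star (w s.castSucc) * w s.castSucc) ^ r s).prod

/-- The off-diagonal factor `z_{i_1 j_1} ⋯ z_{i_m j_m}` of `Pop`. -/
def offDiagMonomial (w : Fin (n + 1) → Hn n →L[ℂ] Hn n) (s : OffDiagIdx n) : Hn n →L[ℂ] Hn n :=
  (List.ofFn fun l => star (w (s.2.1.1 l)) * w (s.2.1.2 l)).prod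

namespace IsWFamily

variable {w : Fin (n + 1) → Hn n →L[ℂ] Hn n}

theorem apply_en (hw : IsWFamily q w) (a : Fin (n + 1)) (k : Fin n → ℕ) :
    w a (en k) = (weight q a k : ℂ) • en (k + raise {a}) := by
  have coe_smul_en (c : ℝ) (l : Fin n → ℕ) : (c : ℂ) • (en l : Hn n) = c • en l :=
    Complex.coe_smul c (en l)
  rw [coe_smul_en]
  cases a using Fin.cases with
  | zero => simp [hw.1, weight, raise_zero_singleton, headSum_apply]
  | succ j =>
    have filter_eq : Finset.univ.filter (fun m : Fin n => (m : ℕ) < n - 1 - j) =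
        Finset.univ.filter fun m : Fin n => (m : ℕ) + j.succ < n := by
      ext m
      simp only [Finset.mem_filter_univ, Fin.val_succ]
      omega
    rw [hw.2, add_raise_succ_singleton, weight, headSum_apply, Nat.cast_sum, filter_eq]
    rfl

theorem star_apply_en (hw : IsWFamily q w) (a : Fin (n + 1)) (k : Fin n → ℕ) :
    star (w a) (en (k + raise {a})) = (weight q a k : ℂ) • en k := by
  have := star_apply_of_apply_eq_smul (enBasis n) (add_left_injective (raise {a}))
    (by simpa only [coe_enBasis] using hw.apply_en a) k
  simpa [coe_enBasis] using this

theorem star_mul_self_apply_en (hw : IsWFamily q w) (a : Fin (n + 1)) (k : Fin n → ℕ) :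
    (star (w a) * w a) (en k) = (weight q a k : ℂ) ^ 2 • en k := by
  rw [mul_apply_eq_comp, hw.apply_en, map_smul, hw.star_apply_en, smul_smul, sq]

theorem isWeightedShift_star_mul (hw : IsWFamily q w) (hq : 1 < |q|) (i j : Fin (n + 1)) :
    IsWeightedShift en (star (w i) * w j) (raise {i}) (raise {j}) := by
  intro k
  refine ⟨weight q j (k + raise {i}) * weight q i (k + raise {j}), ?_, ?_⟩
  · exact_mod_cast mul_ne_zero (weight_ne_zero hq _ _) (weight_ne_zero hq _ _)
  · rw [mul_apply_eq_comp, hw.apply_en, map_smul, add_right_comm, hw.star_apply_en, smul_smul]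

theorem diagMonomial_apply_en (hw : IsWFamily q w) (r k : Fin n → ℕ) :
    diagMonomial w r (en k) = (∏ s, ((weight q s.castSucc k : ℂ) ^ 2) ^ r s) • en k :=
  list_ofFn_prod_pow_apply_of_eigen (fun s => hw.star_mul_self_apply_en s.castSucc k) r

theorem isWeightedShift_offDiagMonomial (hw : IsWFamily q w) (hq : 1 < |q|) (s : OffDiagIdx n) :
    IsWeightedShift en (offDiagMonomial w s) s.source s.target :=
  .prod_ofFn fun _ => hw.isWeightedShift_star_mul hq _ _

end IsWFamily

end QuantumProjectiveSpace

theorem stmt_8_general (n : ℕ) (q : ℝ) (hq : 1 < |q|)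
    (w : Fin (n + 1) → (Hn n →L[ℂ] Hn n)) (hw : IsWFamily q w) :
    LinearIndependent ℂ (Pop w) := by
  have h_mul : LinearIndependent ℂ fun p : OffDiagIdx n × (Fin n → ℕ) =>
      diagMonomial w p.2 * offDiagMonomial w p.1 :=
    linearIndependent_mul_of_isWeightedShift linearIndependent_en hw.diagMonomial_apply_en
      (linearIndependent_prod_weight_sq_pow hq) (hw.isWeightedShift_offDiagMonomial hq)
      fun _ _ => OffDiagIdx.eq_of_source_add_target_eq
  refine h_mul.comp (fun t : PIdx n => (⟨t.1, t.2.2⟩, t.2.1)) ?_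
  rintro ⟨m, r, p⟩ ⟨m', r', p'⟩ h
  cases h
  rfl

/-- Fix `n ≥ 1` and `q > 1`, and let `z_{ij} = w_i* w_j` on `H_n = ℓ²(ℕⁿ)`.  The family of
all monomials `P^{r,i,j,m} = z_{11}^{r_1} ⋯ z_{nn}^{r_n} z_{i_1 j_1} ⋯ z_{i_m j_m}`, over
`r ∈ ℕⁿ`, `m ≥ 0`, decreasing `i_1 ≥ ⋯ ≥ i_m`, increasing `j_1 ≤ ⋯ ≤ j_m` with disjoint
value sets in `{1,…,n+1}`, is linearly independent over `ℂ`. -/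
theorem stmt_8 (n : ℕ) (hn : 1 ≤ n) (q : ℝ) (hq : 1 < q)
    (w : Fin (n + 1) → (Hn n →L[ℂ] Hn n)) (hw : IsWFamily q w) :
    LinearIndependent ℂ (Pop w) :=
  stmt_8_general n q (hq.trans_le (le_abs_self q)) w hw
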